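/- Let A be a Hopf algebra over a field k and let σ : A ⊗ A → k be a convolution-invertible unital 2-cocycle, i.e. σ(x₁,y₁)σ(x₂y₂,z) = σ(y₁,z₁)σ(x,y₂z₂) and σ(1,1)=1 for all x,y,z ∈ A. Then the deformed multiplication x ·_σ y := σ(x₁,y₁) x₂y₂ σ⁻¹(x₃,y₃) is associative with unit 1. -/

import Mathlib

/- STATEMENT 0: For a Hopf algebra `A` over a field `k` and a convolution-invertible
unital 2-cocycle `σ : A ⊗ A → k`, the deformed multiplication
`x ·_σ y = σ(x₁,y₁) x₂y₂ σ⁻¹(x₃,y₃)` is associative with unit `1`. -/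

open TensorProduct

universe u

variable {k : Type u} [Field k]

/-- Convolution product of two functionals on a coalgebra. -/
noncomputable def conv {C : Type u} [AddCommGroup C] [Module k C] [Coalgebra k C]
    (f g : C →ₗ[k] k) : C →ₗ[k] k :=
  LinearMap.mul' k k ∘ₗ TensorProduct.map f g ∘ₗ Coalgebra.comul

/-- `x ↦ φ(x₁) • μ(x₂)`. -/
noncomputable def convL {C A : Type u} [AddCommGroup C] [Module k C] [Coalgebra k C]
    [Ring A] [Algebra k A] (φ : C →ₗ[k] k) (μ : C →ₗ[k] A) : C →ₗ[k] A :=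
  (TensorProduct.lid k A).toLinearMap ∘ₗ TensorProduct.map φ μ ∘ₗ Coalgebra.comul

/-- `x ↦ φ(x₂) • μ(x₁)`. -/
noncomputable def convR {C A : Type u} [AddCommGroup C] [Module k C] [Coalgebra k C]
    [Ring A] [Algebra k A] (μ : C →ₗ[k] A) (φ : C →ₗ[k] k) : C →ₗ[k] A :=
  (TensorProduct.rid k A).toLinearMap ∘ₗ TensorProduct.map μ φ ∘ₗ Coalgebra.comul

/-- The deformed multiplication `x ⊗ y ↦ σ(x₁,y₁) x₂y₂ σ'(x₃,y₃)`. -/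
noncomputable def deform {A : Type u} [Ring A] [HopfAlgebra k A]
    (σ : A ⊗[k] A →ₗ[k] k) (μ : A ⊗[k] A →ₗ[k] A) (σ' : A ⊗[k] A →ₗ[k] k) :
    A ⊗[k] A →ₗ[k] A :=
  convR (convL σ μ) σ'

open TensorProduct

/-- The 2-cocycle condition `σ(x₁,y₁)σ(μ(x₂,y₂),z) = σ(y₁,z₁)σ(x,μ(y₂,z₂))`, stated for a
(possibly deformed) multiplication `μ` on `A`. -/
noncomputable def IsCocycle {A : Type u} [Ring A] [HopfAlgebra k A]
    (μ : A ⊗[k] A →ₗ[k] A) (σ : A ⊗[k] A →ₗ[k] k) : Prop :=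
  conv (LinearMap.mul' k k ∘ₗ TensorProduct.map σ Coalgebra.counit)
      (σ ∘ₗ TensorProduct.map μ LinearMap.id) =
    conv ((LinearMap.mul' k k ∘ₗ TensorProduct.map Coalgebra.counit σ) ∘ₗ
        (TensorProduct.assoc k A A A).toLinearMap)
      (σ ∘ₗ TensorProduct.map LinearMap.id μ ∘ₗ (TensorProduct.assoc k A A A).toLinearMap)

open WithConv in
/-- A scalar functional viewed as an element of the `B`-valued convolution algebra. -/
noncomputable def scal (B : Type u) {C : Type u} [AddCommGroup C] [Module k C] [Coalgebra k C]
    [Ring B] [Algebra k B] (φ : C →ₗ[k] k) : WithConv (C →ₗ[k] B) :=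
  toConv (Algebra.linearMap k B ∘ₗ φ)

section helpers
open WithConv

variable {C D B B' : Type u} [AddCommGroup C] [Module k C] [Coalgebra k C]
  [AddCommGroup D] [Module k D] [Coalgebra k D]
  [Ring B] [Algebra k B] [Ring B'] [Algebra k B']

theorem scal_conv (f g : C →ₗ[k] k) : scal B (conv f g) = scal B f * scal B g := by
  apply ofConv_injective
  exact LinearMap.algHom_comp_convMul_distrib (Algebra.ofId k B) (toConv f) (toConv g)

theorem scal_counit : scal B (Coalgebra.counit : C →ₗ[k] k) = 1 := rfl

theorem scal_mul_apply (f : C →ₗ[k] k) (g : WithConv (C →ₗ[k] B)) (x : C) :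
    (scal B f * g).ofConv x =
      TensorProduct.lid k B (TensorProduct.map f g.ofConv (Coalgebra.comul x)) := by
  change LinearMap.mul' k B (TensorProduct.map (Algebra.linearMap k B ∘ₗ f) g.ofConv
    (Coalgebra.comul x)) = _
  generalize (Coalgebra.comul x : C ⊗[k] C) = t
  induction t with
  | zero => simp
  | add a b ha hb => rw [map_add, map_add, ha, hb, map_add, map_add]
  | tmul a b => simp [Algebra.smul_def]

theorem mul_scal_apply (f : C →ₗ[k] k) (g : WithConv (C →ₗ[k] B)) (x : C) :
    (g * scal B f).ofConv x =
      TensorProduct.rid k B (TensorProduct.map g.ofConv f (Coalgebra.comul x)) := by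
  change LinearMap.mul' k B (TensorProduct.map g.ofConv (Algebra.linearMap k B ∘ₗ f)
    (Coalgebra.comul x)) = _
  generalize (Coalgebra.comul x : C ⊗[k] C) = t
  induction t with
  | zero => simp
  | add a b ha hb => rw [map_add, map_add, ha, hb, map_add, map_add]
  | tmul a b => simp [Algebra.smul_def, Algebra.commutes]

theorem comp_scal_mul (L : B →ₗ[k] B') (f : C →ₗ[k] k) (g : WithConv (C →ₗ[k] B)) :
    toConv (L ∘ₗ (scal B f * g).ofConv) = scal B' f * toConv (L ∘ₗ g.ofConv) := by
  apply ofConv_injective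
  ext x
  rw [scal_mul_apply]
  change L ((scal B f * g).ofConv x) = _
  rw [scal_mul_apply]
  generalize (Coalgebra.comul x : C ⊗[k] C) = t
  induction t with
  | zero => simp
  | add a b ha hb => simp only [map_add, ha, hb]
  | tmul a b => simp

theorem comp_mul_scal (L : B →ₗ[k] B') (f : C →ₗ[k] k) (g : WithConv (C →ₗ[k] B)) :
    toConv (L ∘ₗ (g * scal B f).ofConv) = toConv (L ∘ₗ g.ofConv) * scal B' f := by
  apply ofConv_injective
  ext x
  rw [mul_scal_apply]
  change L ((g * scal B f).ofConv x) = _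
  rw [mul_scal_apply]
  generalize (Coalgebra.comul x : C ⊗[k] C) = t
  induction t with
  | zero => simp
  | add a b ha hb => simp only [map_add, ha, hb]
  | tmul a b => simp

theorem pre_mul (h : C →ₗc[k] D) (f g : WithConv (D →ₗ[k] B)) :
    toConv ((f * g).ofConv ∘ₗ h.toLinearMap) =
      toConv (f.ofConv ∘ₗ h.toLinearMap) * toConv (g.ofConv ∘ₗ h.toLinearMap) := by
  rw [LinearMap.convMul_comp_coalgHom_distrib]

theorem pre_conv (h : C →ₗc[k] D) (f g : D →ₗ[k] k) :
    conv f g ∘ₗ h.toLinearMap = conv (f ∘ₗ h.toLinearMap) (g ∘ₗ h.toLinearMap) :=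
  LinearMap.convMul_comp_coalgHom_distrib (toConv f) (toConv g) h

end helpers

section main
open WithConv
variable {A : Type u} [Ring A] [HopfAlgebra k A]

theorem deform_eq (σ σ' : A ⊗[k] A →ₗ[k] k) (μ : A ⊗[k] A →ₗ[k] A) :
    toConv (deform σ μ σ') = scal A σ * toConv μ * scal A σ' := by
  apply ofConv_injective
  ext1
  ext x y
  simp only [TensorProduct.AlgebraTensorModule.curry_apply, TensorProduct.curry_apply,
    LinearMap.coe_restrictScalars]
  rw [mul_scal_apply]
  have : (scal A σ * toConv μ).ofConv = convL σ μ := by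
    apply LinearMap.ext
    intro z
    rw [scal_mul_apply]
    rfl
  rw [this]
  rfl

/-- `x ↦ 1 ⊗ x`. -/
noncomputable def inR : A →ₗc[k] A ⊗[k] A where
  toLinearMap := TensorProduct.mk k A A 1
  counit_comp := by ext x; simp
  map_comp_comul := by
    ext x
    simp only [LinearMap.comp_apply, TensorProduct.mk_apply, TensorProduct.comul_tmul,
      Bialgebra.comul_one, Algebra.TensorProduct.one_def]
    generalize (Coalgebra.comul x : A ⊗[k] A) = t
    induction t with
    | zero => simp
    | add a b ha hb => simp only [map_add, ha, hb, TensorProduct.tmul_add]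
    | tmul a b => simp

/-- `x ↦ x ⊗ 1`. -/
noncomputable def inL : A →ₗc[k] A ⊗[k] A where
  toLinearMap := (TensorProduct.mk k A A).flip 1
  counit_comp := by ext x; simp
  map_comp_comul := by
    ext x
    simp only [LinearMap.comp_apply, LinearMap.flip_apply, TensorProduct.mk_apply,
      TensorProduct.comul_tmul, Bialgebra.comul_one, Algebra.TensorProduct.one_def]
    generalize (Coalgebra.comul x : A ⊗[k] A) = t
    induction t with
    | zero => simp
    | add a b ha hb => simp only [map_add, ha, hb, TensorProduct.add_tmul]
    | tmul a b => simp

/-- If a coalgebra map `h : A → A ⊗ A` splits the multiplication and `σ ∘ h` is an idempotent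
for convolution, then the deformed multiplication composed with `h` is the identity. -/
theorem deform_comp_eq_id (σ σinv : A ⊗[k] A →ₗ[k] k)
    (hinv : conv σ σinv = Coalgebra.counit) (h : A →ₗc[k] A ⊗[k] A)
    (hid : LinearMap.mul' k A ∘ₗ h.toLinearMap = LinearMap.id)
    (hs : conv (σ ∘ₗ h.toLinearMap) (σ ∘ₗ h.toLinearMap) = σ ∘ₗ h.toLinearMap) :
    deform σ (LinearMap.mul' k A) σinv ∘ₗ h.toLinearMap = LinearMap.id := by
  have h1 : scal A (σ ∘ₗ h.toLinearMap) * scal A (σinv ∘ₗ h.toLinearMap) = 1 := by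
    rw [← scal_conv, ← pre_conv, hinv, h.counit_comp, scal_counit]
  have h2 : scal A (σ ∘ₗ h.toLinearMap) * scal A (σ ∘ₗ h.toLinearMap) =
      scal A (σ ∘ₗ h.toLinearMap) := by
    rw [← scal_conv, hs]
  have h3 : scal A (σ ∘ₗ h.toLinearMap) = 1 := by
    calc scal A (σ ∘ₗ h.toLinearMap) = scal A (σ ∘ₗ h.toLinearMap) *
          (scal A (σ ∘ₗ h.toLinearMap) * scal A (σinv ∘ₗ h.toLinearMap)) := by rw [h1, mul_one]
      _ = 1 := by rw [← mul_assoc, h2, h1]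
  have h4 : scal A (σinv ∘ₗ h.toLinearMap) = 1 := by rwa [h3, one_mul] at h1
  apply toConv_injective
  change toConv ((toConv (deform σ (LinearMap.mul' k A) σinv)).ofConv ∘ₗ h.toLinearMap) = _
  rw [deform_eq, pre_mul, pre_mul]
  change scal A (σ ∘ₗ h.toLinearMap) * toConv (LinearMap.mul' k A ∘ₗ h.toLinearMap) *
    scal A (σinv ∘ₗ h.toLinearMap) = _
  rw [h3, h4, hid, one_mul, mul_one]

/-- `σ(x,y) ε(z)`. -/
noncomputable def s12 (σ : A ⊗[k] A →ₗ[k] k) : (A ⊗[k] A) ⊗[k] A →ₗ[k] k :=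
  LinearMap.mul' k k ∘ₗ TensorProduct.map σ Coalgebra.counit

/-- `ε(x) σ(y,z)`. -/
noncomputable def s23 (σ : A ⊗[k] A →ₗ[k] k) : A ⊗[k] (A ⊗[k] A) →ₗ[k] k :=
  LinearMap.mul' k k ∘ₗ TensorProduct.map Coalgebra.counit σ

theorem scal_s12 (σ : A ⊗[k] A →ₗ[k] k) : scal (A ⊗[k] A) (s12 σ) =
    toConv (TensorProduct.map (scal A σ).ofConv
      (1 : WithConv (A →ₗ[k] A)).ofConv) := by
  apply ofConv_injective
  apply TensorProduct.ext'
  intro w z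
  change algebraMap k (A ⊗[k] A) (σ w * Coalgebra.counit (R := k) z) =
    algebraMap k A (σ w) ⊗ₜ[k] algebraMap k A (Coalgebra.counit (R := k) z)
  rw [Algebra.algebraMap_eq_smul_one, Algebra.algebraMap_eq_smul_one,
    Algebra.algebraMap_eq_smul_one, TensorProduct.smul_tmul_smul, Algebra.TensorProduct.one_def]

theorem scal_s23 (σ : A ⊗[k] A →ₗ[k] k) : scal (A ⊗[k] A) (s23 σ) =
    toConv (TensorProduct.map (1 : WithConv (A →ₗ[k] A)).ofConv (scal A σ).ofConv) := by
  apply ofConv_injective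
  apply TensorProduct.ext'
  intro w z
  change algebraMap k (A ⊗[k] A) (Coalgebra.counit (R := k) w * σ z) =
    algebraMap k A (Coalgebra.counit (R := k) w) ⊗ₜ[k] algebraMap k A (σ z)
  rw [Algebra.algebraMap_eq_smul_one, Algebra.algebraMap_eq_smul_one,
    Algebra.algebraMap_eq_smul_one, TensorProduct.smul_tmul_smul, Algebra.TensorProduct.one_def]

theorem map_deform_id (σ σ' : A ⊗[k] A →ₗ[k] k) (μ : A ⊗[k] A →ₗ[k] A) :
    toConv (TensorProduct.map (deform σ μ σ') (LinearMap.id : A →ₗ[k] A)) =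
      scal (A ⊗[k] A) (s12 σ) * toConv (TensorProduct.map μ LinearMap.id) *
        scal (A ⊗[k] A) (s12 σ') := by
  rw [scal_s12, scal_s12]
  have e1 := TensorProduct.map_convMul_map (R := k) (f := scal A σ) (h := toConv μ)
    (g := (1 : WithConv (A →ₗ[k] A))) (k := toConv LinearMap.id)
  have e2 := TensorProduct.map_convMul_map (R := k) (f := scal A σ * toConv μ) (h := scal A σ')
    (g := (1 : WithConv (A →ₗ[k] A)) * toConv LinearMap.id) (k := 1)
  rw [one_mul] at e1 e2
  rw [mul_one, ← deform_eq] at e2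
  rw [← e1] at e2
  exact e2.symm

theorem map_id_deform (σ σ' : A ⊗[k] A →ₗ[k] k) (μ : A ⊗[k] A →ₗ[k] A) :
    toConv (TensorProduct.map (LinearMap.id : A →ₗ[k] A) (deform σ μ σ')) =
      scal (A ⊗[k] A) (s23 σ) * toConv (TensorProduct.map LinearMap.id μ) *
        scal (A ⊗[k] A) (s23 σ') := by
  rw [scal_s23, scal_s23]
  have e1 := TensorProduct.map_convMul_map (R := k) (g := scal A σ) (k := toConv μ)
    (f := (1 : WithConv (A →ₗ[k] A))) (h := toConv LinearMap.id)
  have e2 := TensorProduct.map_convMul_map (R := k) (g := scal A σ * toConv μ) (k := scal A σ')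
    (f := (1 : WithConv (A →ₗ[k] A)) * toConv LinearMap.id) (h := 1)
  rw [one_mul] at e1 e2
  rw [mul_one, ← deform_eq] at e2
  rw [← e1] at e2
  exact e2.symm

theorem conv_s12 (σ τ : A ⊗[k] A →ₗ[k] k) (h : conv σ τ = Coalgebra.counit) :
    conv (s12 σ) (s12 τ) = Coalgebra.counit := by
  have e1 := TensorProduct.map_convMul_map (R := k) (f := toConv σ) (h := toConv τ)
    (g := (1 : WithConv (A →ₗ[k] k))) (k := 1)
  have e3 := LinearMap.algHom_comp_convMul_distrib (Algebra.TensorProduct.lmul' k (S := k))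
    (toConv (TensorProduct.map σ (Coalgebra.counit : A →ₗ[k] k)))
    (toConv (TensorProduct.map τ (Coalgebra.counit : A →ₗ[k] k)))
  have h' : toConv σ * toConv τ = toConv Coalgebra.counit := congrArg toConv h
  rw [h', mul_one] at e1
  have e4 := e3.symm.trans (congrArg _ (congrArg ofConv e1))
  refine Eq.trans ?_ (e4.trans ?_)
  · rfl
  · apply TensorProduct.ext'
    intro w z
    simp [LinearMap.convOne_def, mul_comm]

theorem conv_s23 (σ τ : A ⊗[k] A →ₗ[k] k) (h : conv σ τ = Coalgebra.counit) :
    conv (s23 σ) (s23 τ) = Coalgebra.counit := by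
  have e1 := TensorProduct.map_convMul_map (R := k) (g := toConv σ) (k := toConv τ)
    (f := (1 : WithConv (A →ₗ[k] k))) (h := 1)
  have e3 := LinearMap.algHom_comp_convMul_distrib (Algebra.TensorProduct.lmul' k (S := k))
    (toConv (TensorProduct.map (Coalgebra.counit : A →ₗ[k] k) σ))
    (toConv (TensorProduct.map (Coalgebra.counit : A →ₗ[k] k) τ))
  have h' : toConv σ * toConv τ = toConv Coalgebra.counit := congrArg toConv h
  rw [h', mul_one] at e1
  have e4 := e3.symm.trans (congrArg _ (congrArg ofConv e1))
  refine Eq.trans ?_ (e4.trans ?_)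
  · rfl
  · apply TensorProduct.ext'
    intro w z
    simp [LinearMap.convOne_def, mul_comm]

/-- `(x ⊗ y) ⊗ z ↦ xy ⊗ z`. -/
noncomputable def cM : (A ⊗[k] A) ⊗[k] A →ₗc[k] A ⊗[k] A :=
  Coalgebra.TensorProduct.map (Bialgebra.mulCoalgHom k A) (CoalgHom.id k A)

/-- `x ⊗ (y ⊗ z) ↦ x ⊗ yz`. -/
noncomputable def cN : A ⊗[k] (A ⊗[k] A) →ₗc[k] A ⊗[k] A :=
  Coalgebra.TensorProduct.map (CoalgHom.id k A) (Bialgebra.mulCoalgHom k A)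

/-- The associator. -/
noncomputable def cA : (A ⊗[k] A) ⊗[k] A →ₗc[k] A ⊗[k] (A ⊗[k] A) :=
  (Coalgebra.TensorProduct.assoc k k A A A).toCoalgHom

theorem left_side (σ σ' : A ⊗[k] A →ₗ[k] k) :
    toConv (deform σ (LinearMap.mul' k A) σ' ∘ₗ
        TensorProduct.map (deform σ (LinearMap.mul' k A) σ') LinearMap.id) =
      scal A (s12 σ) * (scal A (σ ∘ₗ cM.toLinearMap) *
        toConv (LinearMap.mul' k A ∘ₗ cM.toLinearMap) *
        scal A (σ' ∘ₗ cM.toLinearMap)) * scal A (s12 σ') := by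
  have e := map_deform_id σ σ' (LinearMap.mul' k A)
  rw [← ofConv_toConv (TensorProduct.map (deform σ (LinearMap.mul' k A) σ') LinearMap.id), e,
    comp_mul_scal, comp_scal_mul]
  congr 2
  have e2 := pre_mul cM (scal A σ * toConv (LinearMap.mul' k A)) (scal A σ')
  rw [← deform_eq, pre_mul] at e2
  exact e2

theorem right_side (σ σ' : A ⊗[k] A →ₗ[k] k) :
    toConv (deform σ (LinearMap.mul' k A) σ' ∘ₗ
        TensorProduct.map LinearMap.id (deform σ (LinearMap.mul' k A) σ')) =
      scal A (s23 σ) * (scal A (σ ∘ₗ cN.toLinearMap) *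
        toConv (LinearMap.mul' k A ∘ₗ cN.toLinearMap) *
        scal A (σ' ∘ₗ cN.toLinearMap)) * scal A (s23 σ') := by
  have e := map_id_deform σ σ' (LinearMap.mul' k A)
  rw [← ofConv_toConv (TensorProduct.map LinearMap.id (deform σ (LinearMap.mul' k A) σ')), e,
    comp_mul_scal, comp_scal_mul]
  congr 2
  have e2 := pre_mul cN (scal A σ * toConv (LinearMap.mul' k A)) (scal A σ')
  rw [← deform_eq, pre_mul] at e2
  exact e2

theorem right_side' (σ σ' : A ⊗[k] A →ₗ[k] k) :
    toConv (deform σ (LinearMap.mul' k A) σ' ∘ₗ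
        TensorProduct.map LinearMap.id (deform σ (LinearMap.mul' k A) σ') ∘ₗ
        (TensorProduct.assoc k A A A).toLinearMap) =
      scal A (s23 σ ∘ₗ cA.toLinearMap) * (scal A ((σ ∘ₗ cN.toLinearMap) ∘ₗ cA.toLinearMap) *
        toConv ((LinearMap.mul' k A ∘ₗ cN.toLinearMap) ∘ₗ cA.toLinearMap) *
        scal A ((σ' ∘ₗ cN.toLinearMap) ∘ₗ cA.toLinearMap)) *
        scal A (s23 σ' ∘ₗ cA.toLinearMap) := by
  have e := congrArg (fun f => toConv (ofConv f ∘ₗ cA.toLinearMap)) (right_side σ σ')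
  simp only [pre_mul] at e
  exact e

theorem mul_cM_eq : LinearMap.mul' k A ∘ₗ (cM (k := k) (A := A)).toLinearMap =
    (LinearMap.mul' k A ∘ₗ cN.toLinearMap) ∘ₗ cA.toLinearMap := by
  apply TensorProduct.ext_threefold
  intro x y z
  exact mul_assoc x y z

theorem IsCocycle.eq {σ : A ⊗[k] A →ₗ[k] k} (h : IsCocycle (LinearMap.mul' k A) σ) :
    conv (s12 σ) (σ ∘ₗ cM.toLinearMap) =
      conv (s23 σ ∘ₗ cA.toLinearMap) ((σ ∘ₗ cN.toLinearMap) ∘ₗ cA.toLinearMap) := h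

theorem deform_assoc (σ σ' : A ⊗[k] A →ₗ[k] k)
    (h1 : conv σ σ' = Coalgebra.counit) (h2 : conv σ' σ = Coalgebra.counit)
    (h : IsCocycle (LinearMap.mul' k A) σ) :
    (deform σ (LinearMap.mul' k A) σ') ∘ₗ
        TensorProduct.map (deform σ (LinearMap.mul' k A) σ') LinearMap.id =
      (deform σ (LinearMap.mul' k A) σ') ∘ₗ
        TensorProduct.map LinearMap.id (deform σ (LinearMap.mul' k A) σ') ∘ₗ
        (TensorProduct.assoc k A A A).toLinearMap := by
  apply toConv_injective
  rw [left_side, right_side', ← mul_cM_eq]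
  have key := congrArg (scal A) h.eq
  rw [scal_conv, scal_conv] at key
  have a1 : scal A (s12 σ') * scal A (s12 σ) = 1 := by
    rw [← scal_conv, conv_s12 _ _ h2, scal_counit]
  have a2 : scal A (σ' ∘ₗ cM.toLinearMap) * scal A (σ ∘ₗ cM.toLinearMap) = 1 := by
    rw [← scal_conv, ← pre_conv, h2, cM.counit_comp, scal_counit]
  have a3 : scal A (s23 σ ∘ₗ cA.toLinearMap) * scal A (s23 σ' ∘ₗ cA.toLinearMap) = 1 := by
    rw [← scal_conv, ← pre_conv, conv_s23 _ _ h1, cA.counit_comp, scal_counit]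
  have a4 : scal A ((σ ∘ₗ cN.toLinearMap) ∘ₗ cA.toLinearMap) *
      scal A ((σ' ∘ₗ cN.toLinearMap) ∘ₗ cA.toLinearMap) = 1 := by
    rw [← scal_conv, ← pre_conv, ← pre_conv, h1, cN.counit_comp, cA.counit_comp, scal_counit]
  revert key a1 a2 a3 a4
  generalize scal A (s12 σ) = a
  generalize scal A (s12 σ') = a'
  generalize scal A (σ ∘ₗ cM.toLinearMap) = b
  generalize scal A (σ' ∘ₗ cM.toLinearMap) = b'
  generalize scal A (s23 σ ∘ₗ cA.toLinearMap) = c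
  generalize scal A (s23 σ' ∘ₗ cA.toLinearMap) = c'
  generalize scal A ((σ ∘ₗ cN.toLinearMap) ∘ₗ cA.toLinearMap) = d
  generalize scal A ((σ' ∘ₗ cN.toLinearMap) ∘ₗ cA.toLinearMap) = d'
  intro key a1 a2 a3 a4
  have l : (b' * a') * (a * b) = 1 := by
    rw [mul_assoc, ← mul_assoc a', a1, one_mul, a2]
  have r : (a * b) * (d' * c') = 1 := by
    rw [key, mul_assoc, ← mul_assoc d, a4, one_mul, a3]
  have e : b' * a' = d' * c' := left_inv_eq_right_inv l r
  generalize toConv (LinearMap.mul' k A ∘ₗ (cM (k := k) (A := A)).toLinearMap) = m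
  calc a * (b * m * b') * a' = (a * b) * m * (b' * a') := by simp only [mul_assoc]
    _ = (c * d) * m * (d' * c') := by rw [key, e]
    _ = c * (d * m * d') * c' := by simp only [mul_assoc]

theorem counit_conv (f : A →ₗ[k] k) : conv Coalgebra.counit f = f :=
  congrArg ofConv (one_mul (toConv f))

/-- `z ↦ (1 ⊗ 1) ⊗ z`. -/
noncomputable def cK : A →ₗc[k] (A ⊗[k] A) ⊗[k] A :=
  (Coalgebra.TensorProduct.map inR (CoalgHom.id k A)).comp inR

/-- `x ↦ (x ⊗ 1) ⊗ 1`. -/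
noncomputable def cK' : A →ₗc[k] (A ⊗[k] A) ⊗[k] A :=
  (Coalgebra.TensorProduct.map inL (CoalgHom.id k A)).comp inL

theorem cK_apply (z : A) : cK.toLinearMap z = ((1 : A) ⊗ₜ[k] (1 : A)) ⊗ₜ[k] z := rfl

theorem cK'_apply (z : A) : cK'.toLinearMap z = (z ⊗ₜ[k] (1 : A)) ⊗ₜ[k] (1 : A) := rfl

theorem conv_idem_inR (σ : A ⊗[k] A →ₗ[k] k) (hu : σ (1 ⊗ₜ[k] 1) = 1)
    (h : IsCocycle (LinearMap.mul' k A) σ) :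
    conv (σ ∘ₗ inR.toLinearMap) (σ ∘ₗ inR.toLinearMap) = σ ∘ₗ inR.toLinearMap := by
  have e := congrArg (fun f => f ∘ₗ (cK (k := k) (A := A)).toLinearMap) h.eq
  simp only [pre_conv] at e
  have e1 : s12 σ ∘ₗ cK.toLinearMap = Coalgebra.counit := by
    ext z
    rw [LinearMap.comp_apply, cK_apply]
    simp [s12, hu]
  have e2 : (σ ∘ₗ cM.toLinearMap) ∘ₗ cK.toLinearMap = σ ∘ₗ inR.toLinearMap := by
    ext z
    change σ (((1 : A) * 1) ⊗ₜ[k] z) = σ (1 ⊗ₜ[k] z)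
    rw [one_mul]
  have e3 : (s23 σ ∘ₗ cA.toLinearMap) ∘ₗ cK.toLinearMap = σ ∘ₗ inR.toLinearMap := by
    ext z
    change Coalgebra.counit (R := k) (1 : A) * σ (1 ⊗ₜ[k] z) = σ (1 ⊗ₜ[k] z)
    simp
  have e4 : ((σ ∘ₗ cN.toLinearMap) ∘ₗ cA.toLinearMap) ∘ₗ cK.toLinearMap =
      σ ∘ₗ inR.toLinearMap := by
    ext z
    change σ ((1 : A) ⊗ₜ[k] (1 * z)) = σ (1 ⊗ₜ[k] z)
    rw [one_mul]
  rw [e1, e2, e3, e4, counit_conv] at e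
  exact e.symm

theorem conv_idem_inL (σ : A ⊗[k] A →ₗ[k] k) (hu : σ (1 ⊗ₜ[k] 1) = 1)
    (h : IsCocycle (LinearMap.mul' k A) σ) :
    conv (σ ∘ₗ inL.toLinearMap) (σ ∘ₗ inL.toLinearMap) = σ ∘ₗ inL.toLinearMap := by
  have e := congrArg (fun f => f ∘ₗ (cK' (k := k) (A := A)).toLinearMap) h.eq
  simp only [pre_conv] at e
  have e1 : s12 σ ∘ₗ cK'.toLinearMap = σ ∘ₗ inL.toLinearMap := by
    ext z
    change σ (z ⊗ₜ[k] 1) * Coalgebra.counit (R := k) (1 : A) = σ (z ⊗ₜ[k] 1)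
    simp
  have e2 : (σ ∘ₗ cM.toLinearMap) ∘ₗ cK'.toLinearMap = σ ∘ₗ inL.toLinearMap := by
    ext z
    change σ ((z * 1) ⊗ₜ[k] (1 : A)) = σ (z ⊗ₜ[k] 1)
    rw [mul_one]
  have e3 : (s23 σ ∘ₗ cA.toLinearMap) ∘ₗ cK'.toLinearMap = Coalgebra.counit := by
    ext z
    change Coalgebra.counit (R := k) z * σ (1 ⊗ₜ[k] 1) = _
    rw [hu, mul_one]
  have e4 : ((σ ∘ₗ cN.toLinearMap) ∘ₗ cA.toLinearMap) ∘ₗ cK'.toLinearMap =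
      σ ∘ₗ inL.toLinearMap := by
    ext z
    change σ (z ⊗ₜ[k] ((1 : A) * 1)) = σ (z ⊗ₜ[k] 1)
    rw [one_mul]
  rw [e1, e2, e3, e4, counit_conv] at e
  exact e

end main

theorem deformed_mul_assoc_and_unital {A : Type u} [Ring A] [HopfAlgebra k A]
    (σ σinv : A ⊗[k] A →ₗ[k] k)
    (hinv : conv σ σinv = Coalgebra.counit ∧ conv σinv σ = Coalgebra.counit)
    (hunital : σ (1 ⊗ₜ[k] 1) = 1)
    (hcocycle : IsCocycle (LinearMap.mul' k A) σ) :
    (deform σ (LinearMap.mul' k A) σinv) ∘ₗ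
        TensorProduct.map (deform σ (LinearMap.mul' k A) σinv) LinearMap.id =
      (deform σ (LinearMap.mul' k A) σinv) ∘ₗ
        TensorProduct.map LinearMap.id (deform σ (LinearMap.mul' k A) σinv) ∘ₗ
        (TensorProduct.assoc k A A A).toLinearMap ∧
    (∀ x : A, deform σ (LinearMap.mul' k A) σinv (1 ⊗ₜ[k] x) = x) ∧
    (∀ x : A, deform σ (LinearMap.mul' k A) σinv (x ⊗ₜ[k] 1) = x) := by
  refine ⟨deform_assoc σ σinv hinv.1 hinv.2 hcocycle, fun x => ?_, fun x => ?_⟩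
  · exact LinearMap.congr_fun (deform_comp_eq_id σ σinv hinv.1 inR
      (by ext z; exact one_mul z) (conv_idem_inR σ hunital hcocycle)) x
  · exact LinearMap.congr_fun (deform_comp_eq_id σ σinv hinv.1 inL
      (by ext z; exact mul_one z) (conv_idem_inL σ hunital hcocycle)) x
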